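/- Suppose q < |a_1⋯a_{n+1} b_1⋯b_{n+1}| (so |u| < 1), fix i ∈ {1,…,n+1}, and assume a_j b_k ∉ qᶻ for all 1 ≤ j ≤ n+1 and all k ≠ i, and b_k/b_l ∉ qᶻ for all k ≠ l with k, l ≠ i. Then the series defining J̄(b̂_i) converges absolutely and the regularization evaluates as 𝒥̄_i = (1−q)ⁿ (q)_∞ⁿ ∏_{j=1}^{n+1} ∏_{k=1}^{n+1} (q a_j⁻¹ b_k⁻¹)_∞ / (q a_1⁻¹⋯a_{n+1}⁻¹ b_1⁻¹⋯b_{n+1}⁻¹)_∞. (Evaluation of the regularized truncated dual Dixon–Anderson sum; Theorem 4.5 of the paper.) -/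

import Mathlib

/-!
Write `b_i = c` and let `β` be the remaining parameters, so that the multiple series is a function
`F(c)` of `c`. The proof derives a first-order `q`-difference equation for `F` and iterates it
towards `c = ∞`, where the series collapses to a single term.

With `v = (a_1⋯a_{n+1} b_1⋯b_{n+1})⁻¹` the equation is
`(1 - v) F(qc) = ∏_j (1 - 1/(a_j c)) F(c)` (`tsum_dterm_rec`). Since the product of differences is
a Vandermonde determinant, both `F(c)` and `F(qc)` are determinants of one-variable moments
`S_{k,m} = ∑_ν v^ν w(x) x^m`, `x = β_k q^ν`, `0 ≤ m ≤ n` (`hasSum_det`): up to factors, `F(c)` has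
the columns `S_{m+1}` and `F(qc)` the columns `S_{m+1} - c S_m`. The functional equation of the
weight `w` and telescoping show that the polynomial `∏_j (1 - x/b_j) - v ∏_j (1 - a_j x)` sums to
zero against `v^ν w(x)` (`tsum_relPoly`). Its coefficient of `x^{n+1}` vanishes by the choice of
`v`, so this is a linear relation between the `n + 1` columns of moments, and `det_relation`
compares the two determinants.

Replacing `c` by `c q^{-N}` multiplies `u` by `q^N`, so by dominated convergence only the term
`ν = 0` survives as `N → ∞` (`tendsto_tsum_dterm`), while the factors of the recurrence converge to
`(u)_∞` and `∏_j (q/(a_j c))_∞`. The surviving term is rewritten through theta functions in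
`prod_qp_mul_diff`.
-/

open scoped BigOperators
open Finset

/-- The infinite q-Pochhammer symbol `(a)_∞ = ∏_{i=0}^∞ (1 - qⁱ a)`. -/
noncomputable def qp (q a : ℂ) : ℂ := ∏' i : ℕ, (1 - q ^ i * a)

/-- The theta function `θ(a) = (a)_∞ (q/a)_∞`. -/
noncomputable def th (q a : ℂ) : ℂ := qp q a * qp q (q / a)

/-- Summand of the truncated dual Jackson integral of Dixon–Anderson type `J̄(b̂ᵢ)`,
with `u = q a₁⁻¹⋯a_{n+1}⁻¹ b₁⁻¹⋯b_{n+1}⁻¹` and `β = b ∘ i.succAbove`. -/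
noncomputable def jbarTerm {n : ℕ} (q : ℂ) (a b : Fin (n + 1) → ℂ) (i : Fin (n + 1))
    (ν : Fin n → ℕ) : ℂ :=
  (q * (∏ j, a j)⁻¹ * (∏ j, b j)⁻¹) ^ (∑ k, ν k) *
    (∏ k, ∏ j, qp q (q * (b j)⁻¹ * (b (i.succAbove k) * q ^ ν k)) /
        qp q (a j * (b (i.succAbove k) * q ^ ν k))) *
    ∏ k, ∏ l ∈ Finset.Ioi k, (b (i.succAbove k) * q ^ ν k - b (i.succAbove l) * q ^ ν l)

/-- The truncated dual Jackson integral of Dixon–Anderson type `J̄(b̂ᵢ)`. -/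
noncomputable def jbarSum {n : ℕ} (q : ℂ) (a b : Fin (n + 1) → ℂ) (i : Fin (n + 1)) : ℂ :=
  (1 - q) ^ n * ∑' ν : Fin n → ℕ, jbarTerm q a b i ν

/-- The regularization `𝒥̄ᵢ` of the truncated dual Dixon–Anderson sum. -/
noncomputable def jbarReg {n : ℕ} (q : ℂ) (a b : Fin (n + 1) → ℂ) (i : Fin (n + 1)) : ℂ :=
  jbarSum q a b i * (∏ k : Fin n, ∏ j, th q (a j * b (i.succAbove k))) /
    ∏ k : Fin n, ∏ l ∈ Finset.Ioi k,
      b (i.succAbove k) * th q (b (i.succAbove l) / b (i.succAbove k))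

open Filter Topology

/-! ### The infinite q-Pochhammer symbol -/

section QPochhammer

variable {q : ℂ}

lemma summable_norm_neg_pow_mul (hq : ‖q‖ < 1) (x : ℂ) : Summable fun i : ℕ => ‖-(q ^ i * x)‖ := by
  simp only [norm_neg, norm_mul, norm_pow]
  exact (summable_geometric_of_lt_one (norm_nonneg _) hq).mul_right _

lemma multipliable_qp (hq : ‖q‖ < 1) (x : ℂ) : Multipliable fun i : ℕ => 1 - q ^ i * x := by
  simpa only [sub_eq_add_neg] using
    multipliable_one_add_of_summable (summable_norm_neg_pow_mul hq x)

lemma qp_eq_mul (hq : ‖q‖ < 1) (x : ℂ) : qp q x = (1 - x) * qp q (q * x) := by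
  have h := tprod_eq_zero_mul' (f := fun i : ℕ => 1 - q ^ i * x)
    (by simpa only [pow_succ, mul_assoc] using multipliable_qp hq (q * x))
  simp only [qp]
  rw [h]
  simp [pow_succ, mul_assoc]

lemma qp_ne_zero (hq : ‖q‖ < 1) {x : ℂ} (hx : ∀ i : ℕ, 1 - q ^ i * x ≠ 0) : qp q x ≠ 0 := by
  simp only [qp, sub_eq_add_neg]
  exact tprod_one_add_ne_zero_of_summable (fun i => by simpa [sub_eq_add_neg] using hx i)
    (summable_norm_neg_pow_mul hq x)

lemma tendsto_prod_qp (hq : ‖q‖ < 1) (x : ℂ) :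
    Tendsto (fun N : ℕ => ∏ i ∈ range N, (1 - q ^ i * x)) atTop (𝓝 (qp q x)) :=
  (multipliable_qp hq x).hasProd.tendsto_prod_nat

lemma norm_qp_sub_one_le (hq : ‖q‖ < 1) (x : ℂ) :
    ‖qp q x - 1‖ ≤ Real.exp (‖x‖ / (1 - ‖q‖)) - 1 := by
  refine le_of_tendsto ((tendsto_prod_qp hq x).sub_const 1).norm (Eventually.of_forall fun N => ?_)
  have h := Finset.norm_prod_one_add_sub_one_le (range N) (fun i => -(q ^ i * x))
  simp only [← sub_eq_add_neg] at h
  refine h.trans (sub_le_sub_right (Real.exp_le_exp.2 ?_) _)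
  have hs := (summable_norm_neg_pow_mul hq x).sum_le_tsum (range N) (fun _ _ => norm_nonneg _)
  refine hs.trans (le_of_eq ?_)
  simp only [norm_neg, norm_mul, norm_pow]
  rw [tsum_mul_right, tsum_geometric_of_lt_one (norm_nonneg _) hq]
  ring

lemma norm_qp_le (hq : ‖q‖ < 1) {x : ℂ} {R : ℝ} (hx : ‖x‖ ≤ R) :
    ‖qp q x‖ ≤ Real.exp (R / (1 - ‖q‖)) := by
  have h1 := norm_qp_sub_one_le hq x
  have h2 : ‖qp q x‖ ≤ ‖qp q x - 1‖ + ‖(1 : ℂ)‖ := by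
    simpa using norm_add_le (qp q x - 1) 1
  have h3 : Real.exp (‖x‖ / (1 - ‖q‖)) ≤ Real.exp (R / (1 - ‖q‖)) :=
    Real.exp_le_exp.2 (div_le_div_of_nonneg_right hx (by linarith))
  simp only [norm_one] at h2
  linarith

lemma tendsto_qp_one {ι : Type*} {l : Filter ι} {f : ι → ℂ} (hq : ‖q‖ < 1)
    (hf : Tendsto f l (𝓝 0)) : Tendsto (fun t => qp q (f t)) l (𝓝 1) := by
  rw [tendsto_iff_norm_sub_tendsto_zero]
  refine squeeze_zero (fun _ => norm_nonneg _) (fun t => norm_qp_sub_one_le hq (f t)) ?_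
  have h : Tendsto (fun t => Real.exp (‖f t‖ / (1 - ‖q‖)) - 1) l
      (𝓝 (Real.exp (‖(0 : ℂ)‖ / (1 - ‖q‖)) - 1)) :=
    ((Real.continuous_exp.tendsto _).comp (hf.norm.div_const _)).sub_const 1
  simpa using h

lemma tendsto_pow_mul_zero (hq : ‖q‖ < 1) (x : ℂ) :
    Tendsto (fun N : ℕ => x * q ^ N) atTop (𝓝 0) := by
  simpa using (tendsto_pow_atTop_nhds_zero_of_norm_lt_one hq).const_mul x

/-- `1 / (x q^ν)_∞` is bounded in `ν`, because it tends to `1`. -/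
lemma exists_bound_inv_qp (hq : ‖q‖ < 1) (x : ℂ) :
    ∃ C, 0 ≤ C ∧ ∀ ν : ℕ, ‖(qp q (x * q ^ ν))⁻¹‖ ≤ C := by
  have h := ((tendsto_qp_one hq (tendsto_pow_mul_zero hq x)).inv₀ one_ne_zero).norm
  obtain ⟨C, hC⟩ := h.bddAbove_range
  exact ⟨C, (norm_nonneg _).trans (hC ⟨0, rfl⟩), fun ν => hC ⟨ν, rfl⟩⟩

end QPochhammer

/-! ### Multiple series of product and determinant type -/

lemma hasSum_prod_pi {n : ℕ} (f : Fin n → ℕ → ℂ) (hf : ∀ k, Summable fun ν => ‖f k ν‖) :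
    (Summable fun ν : Fin n → ℕ => ‖∏ k, f k (ν k)‖) ∧
      HasSum (fun ν : Fin n → ℕ => ∏ k, f k (ν k)) (∏ k, ∑' ν, f k ν) := by
  induction n with
  | zero =>
    refine ⟨(hasSum_fintype _).summable, ?_⟩
    simp
  | succ n ih =>
    obtain ⟨h1, h2⟩ := ih (fun k => f k.succ) (fun k => hf _)
    have hs : Summable fun ν : Fin (n + 1) → ℕ => ‖∏ k, f k (ν k)‖ := by
      rw [← (Fin.consEquiv (fun _ : Fin (n + 1) => ℕ)).summable_iff]
      refine ((hf 0).mul_norm h1).congr fun p => ?_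
      simp [Fin.prod_univ_succ, Fin.consEquiv]
    refine ⟨hs, ?_⟩
    rw [hs.of_norm.hasSum_iff, ← (Fin.consEquiv (fun _ : Fin (n + 1) => ℕ)).tsum_eq,
      Fin.prod_univ_succ, ← h2.tsum_eq, tsum_mul_tsum_of_summable_norm (hf 0) h1]
    exact tsum_congr fun p => by simp [Fin.prod_univ_succ, Fin.consEquiv]

/-- A determinant whose `k`-th row depends only on the `k`-th summation variable is summed
row by row. -/
lemma hasSum_det {n : ℕ} (g : Fin n → Fin n → ℕ → ℂ)
    (hg : ∀ k m, Summable fun ν => ‖g k m ν‖) :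
    HasSum (fun ν : Fin n → ℕ => (Matrix.of fun k m => g k m (ν k)).det)
      (Matrix.of fun k m => ∑' ν, g k m ν).det := by
  simp only [← Matrix.det_transpose (Matrix.of _), Matrix.det_apply, Matrix.transpose_apply,
    Matrix.of_apply]
  exact hasSum_sum fun σ _ =>
    ((hasSum_prod_pi (fun k => g k (σ k)) (fun k => hg k (σ k))).2).const_smul _

/-! ### A determinant identity -/

/-- If the columns `s 0, …, s n` of length `n` satisfy `∑ m, p m • s m = 0`, then the determinants
of the columns `s (m+1) - c • s m` and of `s (m+1)` are proportional. Both appear in the expansion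
of the determinant of the square matrix with the row `(1, c, …, c^n)` added on top. -/
lemma det_relation {n : ℕ} (S : Fin n → Fin (n + 1) → ℂ) (p : Fin (n + 1) → ℂ) (c : ℂ)
    (h : ∀ k, ∑ m, p m * S k m = 0) :
    p 0 * (Matrix.of fun k m : Fin n => S k m.succ - c * S k m.castSucc).det =
      (∑ m, p m * c ^ (m : ℕ)) * (Matrix.of fun k m : Fin n => S k m.succ).det := by
  let A : Matrix (Fin (n + 1)) (Fin (n + 1)) ℂ :=
    Matrix.of (Fin.cons (fun m => c ^ (m : ℕ)) S)
  let B : Matrix (Fin (n + 1)) (Fin (n + 1)) ℂ :=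
    Matrix.of fun r => Fin.cons (A r 0) fun m : Fin n => A r m.succ - c * A r m.castSucc
  have hAB : A.det = B.det :=
    Matrix.det_eq_of_forall_col_eq_smul_add_pred (fun _ => c) (fun r => by simp [B])
      (fun r m => by simp [B])
  have hB : B.det = (Matrix.of fun k m : Fin n => S k m.succ - c * S k m.castSucc).det := by
    rw [Matrix.det_succ_row_zero, Fin.sum_univ_succ]
    simp only [B, A, Matrix.of_apply, Fin.cons_zero, Fin.cons_succ]
    rw [Finset.sum_eq_zero, add_zero]
    · simp only [Fin.val_zero, pow_zero, one_mul]
      congr 1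
    · intro m _
      simp [pow_succ, mul_comm]
  have hA := Matrix.det_updateCol_sum A 0 p
  rw [Matrix.det_succ_column_zero, Fin.sum_univ_succ, Finset.sum_eq_zero, add_zero] at hA
  · rw [← hB, ← hAB, ← smul_eq_mul, ← hA]
    simp only [A, Matrix.updateCol_self, Matrix.of_apply, Fin.cons_zero, smul_eq_mul,
      Fin.val_zero, pow_zero, one_mul]
    congr 2
  · intro k _
    simp [A, h k]

/-! ### The one-variable weight -/

/-- The weight `∏_j (q x / b_j)_∞ / (a_j x)_∞`, where the parameters `b_j` are `β_1, …, β_n`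
together with the distinguished parameter `c`. -/
noncomputable def wt {n : ℕ} (q : ℂ) (a : Fin (n + 1) → ℂ) (β : Fin n → ℂ) (c x : ℂ) : ℂ :=
  qp q (q * c⁻¹ * x) * (∏ l, qp q (q * (β l)⁻¹ * x)) / ∏ j, qp q (a j * x)

section Weight

variable {n : ℕ} {q : ℂ} {a : Fin (n + 1) → ℂ} {β : Fin n → ℂ}

lemma wt_shift (hq : ‖q‖ < 1) (c x : ℂ) (hx : ∀ j, qp q (a j * x) ≠ 0) :
    wt q a β c (q * x) * ((1 - c⁻¹ * (q * x)) * ∏ l, (1 - (β l)⁻¹ * (q * x))) =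
      wt q a β c x * ∏ j, (1 - a j * x) := by
  have hden : ∏ j, qp q (a j * x) = (∏ j, (1 - a j * x)) * ∏ j, qp q (a j * (q * x)) := by
    rw [← Finset.prod_mul_distrib]
    exact Finset.prod_congr rfl fun j _ => by rw [qp_eq_mul hq, mul_left_comm q]
  have hne : ∏ j, qp q (a j * x) ≠ 0 := Finset.prod_ne_zero_iff.2 fun j _ => hx j
  have hnum : ∏ l, qp q (q * (β l)⁻¹ * x) =
      (∏ l, (1 - (β l)⁻¹ * (q * x))) * ∏ l, qp q (q * (β l)⁻¹ * (q * x)) := by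
    rw [← Finset.prod_mul_distrib]
    refine Finset.prod_congr rfl fun l _ => ?_
    rw [qp_eq_mul hq]
    congr 1 <;> ring_nf
  have hc : qp q (q * c⁻¹ * x) = (1 - c⁻¹ * (q * x)) * qp q (q * c⁻¹ * (q * x)) := by
    rw [qp_eq_mul hq]
    congr 1 <;> ring_nf
  rw [hden] at hne
  have h1 := left_ne_zero_of_mul hne
  have h2 := right_ne_zero_of_mul hne
  rw [wt, wt, hden, hnum, hc]
  generalize ∏ j, (1 - a j * x) = A at *
  generalize ∏ j, qp q (a j * (q * x)) = B at *
  rw [div_mul_eq_mul_div, div_mul_eq_mul_div, div_eq_div_iff h2 (mul_ne_zero h1 h2)]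
  ring

lemma wt_mul_param (hq : ‖q‖ < 1) (hq0 : q ≠ 0) (c x : ℂ) :
    wt q a β (q * c) x = (1 - c⁻¹ * x) * wt q a β c x := by
  have hc : qp q (q * (q * c)⁻¹ * x) = (1 - c⁻¹ * x) * qp q (q * c⁻¹ * x) := by
    rw [mul_inv, mul_inv_cancel_left₀ hq0, qp_eq_mul hq, mul_assoc q]
  rw [wt, wt, hc]
  ring

/-- The weight is bounded along the lattice of summation, uniformly for `c` away from `0`. -/
lemma exists_bound_wt (hq : ‖q‖ < 1) {c₀ : ℝ} (hc₀ : 0 < c₀) :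
    ∃ C, 0 ≤ C ∧ ∀ c, c₀ ≤ ‖c‖ → ∀ k ν, ‖wt q a β c (β k * q ^ ν)‖ ≤ C := by
  have key : ∀ k, ∃ C, 0 ≤ C ∧ ∀ c, c₀ ≤ ‖c‖ → ∀ ν : ℕ, ‖wt q a β c (β k * q ^ ν)‖ ≤ C := by
    intro k
    choose D hD0 hD using fun j => exists_bound_inv_qp hq (a j * β k)
    have hsmall : ∀ y : ℂ, ∀ ν : ℕ, ‖q * y * (β k * q ^ ν)‖ ≤ ‖y‖ * ‖β k‖ := by
      intro y ν
      have h1 : ‖q‖ ^ ν ≤ 1 := pow_le_one₀ (norm_nonneg _) hq.le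
      have h2 : ‖q‖ * ‖q‖ ^ ν ≤ 1 := mul_le_one₀ hq.le (by positivity) h1
      calc ‖q * y * (β k * q ^ ν)‖ = (‖y‖ * ‖β k‖) * (‖q‖ * ‖q‖ ^ ν) := by
            simp only [norm_mul, norm_pow]; ring
        _ ≤ (‖y‖ * ‖β k‖) * 1 := by gcongr
        _ = _ := mul_one _
    refine ⟨Real.exp (c₀⁻¹ * ‖β k‖ / (1 - ‖q‖)) *
      (∏ l, Real.exp (‖(β l)⁻¹‖ * ‖β k‖ / (1 - ‖q‖))) * ∏ j, D j, ?_, ?_⟩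
    · have := Finset.prod_nonneg fun j (_ : j ∈ Finset.univ) => hD0 j
      positivity
    · intro c hc ν
      rw [wt, div_eq_mul_inv, norm_mul, norm_mul, ← Finset.prod_inv_distrib, norm_prod, norm_prod]
      gcongr with l _ j _
      · refine norm_qp_le hq ((hsmall _ _).trans ?_)
        rw [norm_inv]
        gcongr
      · exact norm_qp_le hq (hsmall _ _)
      · rw [← mul_assoc]
        exact hD j ν
  choose C hC0 hC using key
  refine ⟨∑ k, C k, Finset.sum_nonneg fun k _ => hC0 k, fun c hc k ν => (hC k c hc ν).trans ?_⟩
  exact Finset.single_le_sum (f := C) (fun k _ => hC0 k) (Finset.mem_univ k)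

lemma summable_wt (hq : ‖q‖ < 1) {c v : ℂ} (hc : c ≠ 0) (hv : ‖v‖ < 1) (k : Fin n) (m : ℕ) :
    Summable fun ν : ℕ => ‖v ^ ν * wt q a β c (β k * q ^ ν) * (β k * q ^ ν) ^ m‖ := by
  obtain ⟨C, hC0, hC⟩ := exists_bound_wt (a := a) (β := β) hq (norm_pos_iff.2 hc)
  refine Summable.of_nonneg_of_le (fun _ => norm_nonneg _) (fun ν => ?_)
    ((summable_geometric_of_lt_one (norm_nonneg v) hv).mul_right (C * ‖β k‖ ^ m))
  have h1 : ‖q‖ ^ ν ≤ 1 := pow_le_one₀ (norm_nonneg _) hq.le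
  have h2 : ‖β k * q ^ ν‖ ≤ ‖β k‖ := by
    rw [norm_mul, norm_pow]
    exact mul_le_of_le_one_right (norm_nonneg _) h1
  rw [norm_mul, norm_mul, norm_pow, norm_pow, mul_assoc]
  gcongr
  exact hC c le_rfl k ν

/-- The polynomial `∏_j (1 - X / b_j) - v ∏_j (1 - a_j X)`, whose values sum to zero against the
weight. -/
noncomputable def relPoly (a : Fin (n + 1) → ℂ) (β : Fin n → ℂ) (c v : ℂ) : Polynomial ℂ :=
  (1 - Polynomial.C c⁻¹ * Polynomial.X) * (∏ l, (1 - Polynomial.C (β l)⁻¹ * Polynomial.X)) -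
    Polynomial.C v * ∏ j, (1 - Polynomial.C (a j) * Polynomial.X)

lemma eval_relPoly (c v x : ℂ) : (relPoly a β c v).eval x =
    (1 - c⁻¹ * x) * (∏ l, (1 - (β l)⁻¹ * x)) - v * ∏ j, (1 - a j * x) := by
  simp [relPoly, Polynomial.eval_prod]

/-- The balancing condition `v ∏ a_j ∏ b_j = 1` makes the top coefficient vanish. -/
lemma natDegree_relPoly_lt {c v : ℂ} (hv : v * ∏ j, a j = (c * ∏ l, β l)⁻¹) :
    (relPoly a β c v).natDegree < n + 1 := by
  have hlin : ∀ x : ℂ, (1 - Polynomial.C x * Polynomial.X).natDegree ≤ 1 := fun x => by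
    compute_degree
  have hcoef : ∀ x : ℂ, (1 - Polynomial.C x * Polynomial.X).coeff 1 = -x := fun x => by
    simp [Polynomial.coeff_one]
  have hprod : ∀ f : Fin (n + 1) → ℂ,
      (∏ j, (1 - Polynomial.C (f j) * Polynomial.X)).natDegree ≤ n + 1 ∧
      (∏ j, (1 - Polynomial.C (f j) * Polynomial.X)).coeff (n + 1) = ∏ j, (-f j) := by
    intro f
    constructor
    · refine (Polynomial.natDegree_prod_le _ _).trans ?_
      refine (Finset.sum_le_card_nsmul _ _ 1 fun j _ => hlin _).trans ?_
      simp
    · have := Polynomial.coeff_prod_of_natDegree_le Finset.univ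
        (fun j => 1 - Polynomial.C (f j) * Polynomial.X) 1 (fun j _ => hlin _)
      simpa [hcoef, Polynomial.coeff_one] using this
  have hcons : (1 - Polynomial.C c⁻¹ * Polynomial.X) *
      (∏ l, (1 - Polynomial.C (β l)⁻¹ * Polynomial.X)) =
      ∏ j, (1 - Polynomial.C ((Fin.cons c⁻¹ fun l => (β l)⁻¹ : Fin (n + 1) → ℂ) j)
        * Polynomial.X) := by
    rw [Fin.prod_univ_succ]
    simp
  rw [relPoly, hcons]
  obtain ⟨d1, e1⟩ := hprod (Fin.cons c⁻¹ fun l => (β l)⁻¹)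
  obtain ⟨d2, e2⟩ := hprod a
  rw [Nat.lt_succ_iff, Polynomial.natDegree_le_iff_coeff_eq_zero]
  intro N hN
  rcases Nat.lt_or_ge (n + 1) N with h | h
  · rw [Polynomial.coeff_sub, Polynomial.coeff_C_mul,
      Polynomial.coeff_eq_zero_of_natDegree_lt (d1.trans_lt h),
      Polynomial.coeff_eq_zero_of_natDegree_lt (d2.trans_lt h)]
    simp
  · obtain rfl : N = n + 1 := by omega
    rw [Polynomial.coeff_sub, Polynomial.coeff_C_mul, e1, e2, Finset.prod_neg, Finset.prod_neg,
      mul_left_comm, hv, Fin.prod_univ_succ]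
    simp only [Fin.cons_zero, Fin.cons_succ, Finset.prod_inv_distrib, mul_inv]
    ring

/-- The telescoping identity behind the recurrence: the values of `relPoly` sum to zero against
the weight, because the boundary term at `x = β k` has the vanishing factor `1 - x / β k`. -/
lemma tsum_relPoly (hq : ‖q‖ < 1) (hβ : ∀ k, β k ≠ 0)
    (hqa : ∀ j k, ∀ ν : ℕ, qp q (a j * (β k * q ^ ν)) ≠ 0)
    {c v : ℂ} (hc : c ≠ 0) (hv1 : ‖v‖ < 1)
    (hv : v * ∏ j, a j = (c * ∏ l, β l)⁻¹) (k : Fin n) :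
    ∑ m : Fin (n + 1), (relPoly a β c v).coeff m *
      ∑' ν : ℕ, v ^ ν * wt q a β c (β k * q ^ ν) * (β k * q ^ ν) ^ (m : ℕ) = 0 := by
  set z : ℕ → ℂ := fun ν => β k * q ^ ν with hz
  set G : ℕ → ℂ := fun ν =>
    v ^ ν * wt q a β c (z ν) * ((1 - c⁻¹ * z ν) * ∏ l, (1 - (β l)⁻¹ * z ν)) with hG
  have hsum : ∀ P : Polynomial ℂ,
      Summable fun ν : ℕ => v ^ ν * wt q a β c (z ν) * P.eval (z ν) := by
    intro P
    simp only [Polynomial.eval_eq_sum_range, Finset.mul_sum]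
    refine summable_sum fun m _ => ?_
    refine ((summable_wt (a := a) (β := β) hq hc hv1 k m).of_norm.mul_left (P.coeff m)).congr
      fun ν => ?_
    simp only [hz]
    ring
  have hGs : Summable G := by
    refine (hsum ((1 - Polynomial.C c⁻¹ * Polynomial.X) *
      (∏ l, (1 - Polynomial.C (β l)⁻¹ * Polynomial.X)))).congr fun ν => ?_
    simp [hG, Polynomial.eval_prod]
  have hG0 : G 0 = 0 := by
    have : ∏ l, (1 - (β l)⁻¹ * z 0) = 0 :=
      Finset.prod_eq_zero (Finset.mem_univ k) (by simp [hz, hβ k])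
    simp [hG, this]
  have hGsucc : ∀ ν, G (ν + 1) = v ^ ν * wt q a β c (z ν) * (v * ∏ j, (1 - a j * z ν)) := by
    intro ν
    have hzs : z (ν + 1) = q * z ν := by simp only [hz]; ring
    have := wt_shift (β := β) hq c (z ν) (fun j => hqa j k ν)
    simp only [hG, hzs]
    rw [mul_assoc, this]
    ring
  have htot : ∑' ν : ℕ, v ^ ν * wt q a β c (z ν) * (relPoly a β c v).eval (z ν) = 0 := by
    have h1 : ∀ ν, v ^ ν * wt q a β c (z ν) * (relPoly a β c v).eval (z ν) =
        G ν - G (ν + 1) := by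
      intro ν
      rw [hGsucc, eval_relPoly]
      simp only [hG]
      ring
    rw [tsum_congr h1, hGs.tsum_sub ((summable_nat_add_iff 1).2 hGs), hGs.tsum_eq_zero_add, hG0]
    ring
  rw [← htot]
  have h2 : ∀ ν, v ^ ν * wt q a β c (z ν) * (relPoly a β c v).eval (z ν) =
      ∑ m : Fin (n + 1), (relPoly a β c v).coeff m *
        (v ^ ν * wt q a β c (z ν) * z ν ^ (m : ℕ)) := by
    intro ν
    rw [Polynomial.eval_eq_sum_range' (natDegree_relPoly_lt hv), Finset.mul_sum,
      Finset.sum_range]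
    exact Finset.sum_congr rfl fun m _ => by ring
  rw [tsum_congr h2, Summable.tsum_finsetSum]
  · exact Finset.sum_congr rfl fun m _ => tsum_mul_left.symm
  · exact fun m _ => (summable_wt (a := a) (β := β) hq hc hv1 k m).of_norm.mul_left _

end Weight

/-! ### The recurrence in the distinguished parameter -/

/-- The summand of the truncated dual Jackson integral with the parameters separated into
`β = b̂_i` and the remaining one `c = b_i`. -/
noncomputable def dterm {n : ℕ} (q : ℂ) (a : Fin (n + 1) → ℂ) (β : Fin n → ℂ) (c : ℂ)
    (ν : Fin n → ℕ) : ℂ :=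
  (q * (∏ j, a j)⁻¹ * (c * ∏ l, β l)⁻¹) ^ (∑ k, ν k) *
    (∏ k, wt q a β c (β k * q ^ ν k)) *
    ∏ k, ∏ l ∈ Finset.Ioi k, (β k * q ^ ν k - β l * q ^ ν l)

section Recurrence

variable {n : ℕ} {q : ℂ} {a : Fin (n + 1) → ℂ} {β : Fin n → ℂ}

lemma jbarTerm_eq_dterm (q : ℂ) (a b : Fin (n + 1) → ℂ) (i : Fin (n + 1)) (ν : Fin n → ℕ) :
    jbarTerm q a b i ν = dterm q a (fun k => b (i.succAbove k)) (b i) ν := by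
  simp only [jbarTerm, dterm, wt, Finset.prod_div_distrib]
  simp only [Fin.prod_univ_succAbove (fun j => qp q (q * (b j)⁻¹ * _)) i,
    Fin.prod_univ_succAbove b i]

/-- A uniform bound which gives both summability and dominated convergence as `c → ∞`. -/
lemma exists_bound_dterm (hq : ‖q‖ < 1) {c₀ r : ℝ} (hc₀ : 0 < c₀) (hr0 : 0 ≤ r) (hr : r < 1) :
    ∃ B : (Fin n → ℕ) → ℝ, Summable B ∧ ∀ c, c₀ ≤ ‖c‖ →
      ‖q * (∏ j, a j)⁻¹ * (c * ∏ l, β l)⁻¹‖ ≤ r → ∀ ν, ‖dterm q a β c ν‖ ≤ B ν := by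
  obtain ⟨C, hC0, hC⟩ := exists_bound_wt (a := a) (β := β) hq hc₀
  refine ⟨fun ν => (∏ k, r ^ ν k * C) * ∏ k, ∏ l ∈ Finset.Ioi k, (‖β k‖ + ‖β l‖), ?_, ?_⟩
  · refine Summable.mul_right _ ?_
    have h := (hasSum_prod_pi (n := n) (fun _ ν => ((r ^ ν * C : ℝ) : ℂ)) (fun _ => ?_)).1
    · refine h.congr fun ν => ?_
      rw [norm_prod]
      refine Finset.prod_congr rfl fun k _ => ?_
      rw [Complex.norm_real, Real.norm_of_nonneg (by positivity)]
    · refine ((summable_geometric_of_lt_one hr0 hr).mul_right C).congr fun ν => ?_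
      rw [Complex.norm_real, Real.norm_of_nonneg (by positivity)]
  · intro c hc hu ν
    have hz : ∀ k, ‖β k * q ^ ν k‖ ≤ ‖β k‖ := fun k => by
      rw [norm_mul, norm_pow]
      exact mul_le_of_le_one_right (norm_nonneg _) (pow_le_one₀ (norm_nonneg _) hq.le)
    beta_reduce
    rw [dterm, norm_mul, norm_mul, norm_pow, Finset.prod_mul_distrib, Finset.prod_pow_eq_pow_sum,
      norm_prod, norm_prod]
    simp only [norm_prod]
    gcongr with k _ k _ l _
    · exact hC c hc k (ν k)
    · exact (norm_sub_le _ _).trans (add_le_add (hz k) (hz l))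

lemma summable_dterm (hq : ‖q‖ < 1) {c : ℂ} (hc : c ≠ 0)
    (hu : ‖q * (∏ j, a j)⁻¹ * (c * ∏ l, β l)⁻¹‖ < 1) : Summable (dterm q a β c) := by
  obtain ⟨B, hB, h⟩ := exists_bound_dterm (n := n) (a := a) (β := β) hq (norm_pos_iff.2 hc)
    (norm_nonneg _) hu
  exact Summable.of_norm_bounded hB (h c le_rfl le_rfl)

/-- The product of differences is, up to a sign depending only on `n`, a Vandermonde
determinant, into whose rows the one-variable weights are absorbed. -/
lemma prod_mul_diff_eq_det (g z : Fin n → ℂ) :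
    (∏ k, g k) * ∏ k, ∏ l ∈ Finset.Ioi k, (z k - z l) =
      (∏ k : Fin n, ∏ _l ∈ Finset.Ioi k, (-1 : ℂ)) *
        (Matrix.of fun k m : Fin n => g k * z k ^ (m : ℕ)).det := by
  have h1 : (Matrix.of fun k m : Fin n => g k * z k ^ (m : ℕ)).det =
      (∏ k, g k) * (Matrix.vandermonde z).det := by
    rw [← Matrix.det_mul_column]
    rfl
  rw [h1, Matrix.det_vandermonde, mul_left_comm]
  congr 1
  rw [← Finset.prod_mul_distrib]
  refine Finset.prod_congr rfl fun k _ => ?_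
  rw [← Finset.prod_mul_distrib]
  exact Finset.prod_congr rfl fun l _ => by ring

/-- The first-order `q`-difference equation relating the sums at `q c` and at `c`. -/
lemma tsum_dterm_rec (hq : ‖q‖ < 1) (hq0 : q ≠ 0) (ha : ∀ j, a j ≠ 0) (hβ : ∀ k, β k ≠ 0)
    (hqa : ∀ j k, ∀ ν : ℕ, qp q (a j * (β k * q ^ ν)) ≠ 0)
    {c : ℂ} (hc : c ≠ 0) (hv1 : ‖(∏ j, a j)⁻¹ * (c * ∏ l, β l)⁻¹‖ < 1) :
    (1 - (∏ j, a j)⁻¹ * (c * ∏ l, β l)⁻¹) * ∑' ν, dterm q a β (q * c) ν =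
      (∏ j, (1 - (a j)⁻¹ * c⁻¹)) * ∑' ν, dterm q a β c ν := by
  set v := (∏ j, a j)⁻¹ * (c * ∏ l, β l)⁻¹ with hvdef
  have hA : ∏ j, a j ≠ 0 := Finset.prod_ne_zero_iff.2 fun j _ => ha j
  have hB : ∏ l, β l ≠ 0 := Finset.prod_ne_zero_iff.2 fun j _ => hβ j
  have hv : v * ∏ j, a j = (c * ∏ l, β l)⁻¹ := by
    rw [hvdef, mul_right_comm, inv_mul_cancel₀ hA, one_mul]
  set ε : ℂ := ∏ k : Fin n, ∏ _l ∈ Finset.Ioi k, (-1 : ℂ) with hε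
  set S : Fin n → Fin (n + 1) → ℂ := fun k m =>
    ∑' ν : ℕ, v ^ ν * wt q a β c (β k * q ^ ν) * (β k * q ^ ν) ^ (m : ℕ) with hS
  have hsm : ∀ (k : Fin n) (m : ℕ),
      Summable fun ν : ℕ => ‖v ^ ν * wt q a β c (β k * q ^ ν) * (β k * q ^ ν) ^ m‖ :=
    fun k m => summable_wt hq hc hv1 k m
  -- the sum at `c`, as a determinant of moments
  have h0 : (∏ l, β l) * ∑' ν, dterm q a β c ν =
      ε * (Matrix.of fun k m : Fin n => S k m.succ).det := by
    have := hasSum_det (n := n)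
      (fun k m ν => v ^ ν * wt q a β c (β k * q ^ ν) * (β k * q ^ ν) ^ ((m.succ : Fin (n + 1)) : ℕ))
      (fun k m => hsm k _)
    rw [← this.tsum_eq, ← tsum_mul_left, ← tsum_mul_left]
    refine tsum_congr fun ν => ?_
    have hd := prod_mul_diff_eq_det
      (fun k => v ^ ν k * wt q a β c (β k * q ^ ν k) * (β k * q ^ ν k)) (fun k => β k * q ^ ν k)
    rw [← hε] at hd
    simp only [Fin.val_succ, pow_succ', ← mul_assoc] at hd ⊢
    rw [← hd, dterm, ← Finset.prod_pow_eq_pow_sum]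
    simp only [← mul_assoc]
    rw [← Finset.prod_mul_distrib, ← Finset.prod_mul_distrib]
    congr 1
    refine Finset.prod_congr rfl fun k _ => ?_
    rw [mul_assoc q, ← hvdef, mul_pow]
    ring
  -- the sum at `q * c`
  have h1 : (-c) ^ n * ∑' ν, dterm q a β (q * c) ν =
      ε * (Matrix.of fun k m : Fin n => S k m.succ - c * S k m.castSucc).det := by
    have := hasSum_det (n := n)
      (fun k m ν => v ^ ν * wt q a β c (β k * q ^ ν) * (β k * q ^ ν) ^ ((m.succ : Fin (n + 1)) : ℕ)
        - c * (v ^ ν * wt q a β c (β k * q ^ ν) * (β k * q ^ ν) ^ (m.castSucc : ℕ)))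
      (fun k m => Summable.of_nonneg_of_le (fun _ => norm_nonneg _)
        (fun ν => (norm_sub_le _ _).trans (by rw [norm_mul c]))
        ((hsm k _).add ((hsm k _).mul_left ‖c‖)))
    have hS' : ∀ (k m : Fin n), S k m.succ - c * S k m.castSucc =
      ∑' ν : ℕ,
        (v ^ ν * wt q a β c (β k * q ^ ν) * (β k * q ^ ν) ^ ((m.succ : Fin (n + 1)) : ℕ)
        - c * (v ^ ν * wt q a β c (β k * q ^ ν) * (β k * q ^ ν) ^ (m.castSucc : ℕ))) := by
      intro k m
      rw [(hsm k _).of_norm.tsum_sub ((hsm k _).of_norm.mul_left c), tsum_mul_left]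
    simp only [hS']
    rw [← this.tsum_eq, ← tsum_mul_left, ← tsum_mul_left]
    refine tsum_congr fun ν => ?_
    have hd := prod_mul_diff_eq_det
      (fun k => -c * (v ^ ν k * wt q a β (q * c) (β k * q ^ ν k))) (fun k => β k * q ^ ν k)
    have hmat : (Matrix.of fun k m : Fin n =>
        -c * (v ^ ν k * wt q a β (q * c) (β k * q ^ ν k)) * (β k * q ^ ν k) ^ (m : ℕ)) =
        Matrix.of fun k m : Fin n => v ^ ν k * wt q a β c (β k * q ^ ν k) *
          (β k * q ^ ν k) ^ ((m.succ : Fin (n + 1)) : ℕ)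
        - c * (v ^ ν k * wt q a β c (β k * q ^ ν k) * (β k * q ^ ν k) ^ (m.castSucc : ℕ)) := by
      ext k m
      simp only [Matrix.of_apply, wt_mul_param hq hq0, Fin.val_succ, Fin.val_castSucc, pow_succ]
      field_simp
      ring
    rw [← hε, hmat] at hd
    rw [← hd, dterm, ← Finset.prod_pow_eq_pow_sum, Finset.prod_mul_distrib,
      Finset.prod_mul_distrib, Finset.prod_const, Finset.card_univ, Fintype.card_fin]
    have hu : q * (∏ j, a j)⁻¹ * (q * c * ∏ l, β l)⁻¹ = v := by
      rw [hvdef]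
      field_simp
    rw [hu]
    ring
  have hrel := det_relation S (fun m => (relPoly a β c v).coeff m) c
    (tsum_relPoly hq hβ hqa hc hv1 hv)
  have hp0 : (relPoly a β c v).coeff ((0 : Fin (n + 1)) : ℕ) = 1 - v := by
    rw [Fin.val_zero, Polynomial.coeff_zero_eq_eval_zero, eval_relPoly]
    simp
  have hpc : ∑ m : Fin (n + 1), (relPoly a β c v).coeff m * c ^ (m : ℕ) =
      -v * ∏ j, (1 - a j * c) := by
    rw [← Finset.sum_range (fun m => (relPoly a β c v).coeff m * c ^ m),
      ← Polynomial.eval_eq_sum_range' (natDegree_relPoly_lt hv), eval_relPoly]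
    simp [hc]
  rw [hp0, hpc] at hrel
  have hprod : (∏ j, (1 - a j * c)) =
      (-c) ^ (n + 1) * (∏ j, a j) * ∏ j, (1 - (a j)⁻¹ * c⁻¹) := by
    have hcn : (-c) ^ (n + 1) = ∏ _j : Fin (n + 1), (-c) := by simp
    rw [hcn, ← Finset.prod_mul_distrib, ← Finset.prod_mul_distrib]
    refine Finset.prod_congr rfl fun j _ => ?_
    have := ha j
    field_simp
    ring
  have hvv : v * (∏ j, a j) * c * ∏ l, β l = 1 := by
    rw [hv]
    field_simp
  have hcn : (-c) ^ n ≠ 0 := pow_ne_zero _ (neg_ne_zero.2 hc)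
  refine mul_left_cancel₀ hcn ?_
  calc (-c) ^ n * ((1 - v) * ∑' ν, dterm q a β (q * c) ν)
      = (1 - v) * ((-c) ^ n * ∑' ν, dterm q a β (q * c) ν) := by ring
    _ = ε * (-v * (∏ j, (1 - a j * c)) * (Matrix.of fun k m : Fin n => S k m.succ).det) := by
        rw [h1, ← hrel]; ring
    _ = -v * (∏ j, (1 - a j * c)) * ((∏ l, β l) * ∑' ν, dterm q a β c ν) := by
        rw [h0]; ring
    _ = (v * (∏ j, a j) * c * ∏ l, β l) *
          ((-c) ^ n * ((∏ j, (1 - (a j)⁻¹ * c⁻¹)) * ∑' ν, dterm q a β c ν)) := by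
        rw [hprod]; ring
    _ = _ := by rw [hvv, one_mul]

end Recurrence

/-! ### The limit `c → ∞` -/

section Limit

variable {n : ℕ} {q : ℂ} {a : Fin (n + 1) → ℂ} {β : Fin n → ℂ}

lemma tsum_dterm_iterate (hq : ‖q‖ < 1) (hq0 : q ≠ 0) (ha : ∀ j, a j ≠ 0) (hβ : ∀ k, β k ≠ 0)
    (hqa : ∀ j k, ∀ ν : ℕ, qp q (a j * (β k * q ^ ν)) ≠ 0)
    {c : ℂ} (hc : c ≠ 0) (hu : ‖q * (∏ j, a j)⁻¹ * (c * ∏ l, β l)⁻¹‖ < 1) (N : ℕ) :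
    (∏ s ∈ range N, (1 - q ^ s * (q * (∏ j, a j)⁻¹ * (c * ∏ l, β l)⁻¹))) *
        ∑' ν, dterm q a β c ν =
      (∏ j, ∏ s ∈ range N, (1 - q ^ s * (q * (a j)⁻¹ * c⁻¹))) *
        ∑' ν, dterm q a β (c / q ^ N) ν := by
  induction N with
  | zero => simp
  | succ N ih =>
    have hqN : q ^ N ≠ 0 := pow_ne_zero _ hq0
    have hqc : q * (c / q ^ (N + 1)) = c / q ^ N := by
      rw [pow_succ]
      field_simp
    have hv : (∏ j, a j)⁻¹ * (c / q ^ (N + 1) * ∏ l, β l)⁻¹ =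
        q ^ N * (q * (∏ j, a j)⁻¹ * (c * ∏ l, β l)⁻¹) := by
      simp only [mul_inv, div_eq_mul_inv, inv_inv, pow_succ]
      ring
    have he : ∀ j, (a j)⁻¹ * (c / q ^ (N + 1))⁻¹ = q ^ N * (q * (a j)⁻¹ * c⁻¹) := by
      intro j
      simp only [mul_inv, div_eq_mul_inv, inv_inv, pow_succ]
      ring
    have h := tsum_dterm_rec hq hq0 ha hβ hqa (c := c / q ^ (N + 1))
      (div_ne_zero hc (pow_ne_zero _ hq0)) (by
        rw [hv, norm_mul, norm_pow]
        exact mul_lt_one_of_nonneg_of_lt_one_right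
          (pow_le_one₀ (norm_nonneg _) hq.le) (norm_nonneg _) hu)
    rw [hqc, hv] at h
    simp only [he] at h
    simp only [Finset.prod_range_succ, Finset.prod_mul_distrib]
    rw [mul_right_comm, ih, mul_right_comm, mul_assoc, h]
    ring

/-- As `c → ∞` along a `q`-progression, only the term `ν = 0` survives. -/
lemma tendsto_tsum_dterm (hq : ‖q‖ < 1) (hq0 : q ≠ 0)
    {c : ℂ} (hc : c ≠ 0) (hu : ‖q * (∏ j, a j)⁻¹ * (c * ∏ l, β l)⁻¹‖ < 1) :
    Tendsto (fun N : ℕ => ∑' ν, dterm q a β (c / q ^ N) ν) atTop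
      (𝓝 ((∏ k, (∏ l, qp q (q * (β l)⁻¹ * β k)) / ∏ j, qp q (a j * β k)) *
        ∏ k, ∏ l ∈ Finset.Ioi k, (β k - β l))) := by
  set u := q * (∏ j, a j)⁻¹ * (c * ∏ l, β l)⁻¹ with hudef
  have huN : ∀ N : ℕ, q * (∏ j, a j)⁻¹ * (c / q ^ N * ∏ l, β l)⁻¹ = u * q ^ N := by
    intro N
    simp only [hudef, mul_inv, div_eq_mul_inv, inv_inv]
    ring
  obtain ⟨B, hB, hbd⟩ := exists_bound_dterm (n := n) (a := a) (β := β) hq (norm_pos_iff.2 hc)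
    (norm_nonneg _) hu
  set T : (Fin n → ℕ) → ℂ := fun ν => if ν = 0 then
    ((∏ k, (∏ l, qp q (q * (β l)⁻¹ * β k)) / ∏ j, qp q (a j * β k)) *
        ∏ k, ∏ l ∈ Finset.Ioi k, (β k - β l)) else 0 with hT
  have hTs : ∑' ν, T ν = (∏ k, (∏ l, qp q (q * (β l)⁻¹ * β k)) / ∏ j, qp q (a j * β k)) *
        ∏ k, ∏ l ∈ Finset.Ioi k, (β k - β l) := by
    simp only [hT]
    rw [tsum_ite_eq]
  rw [← hTs]
  refine tendsto_tsum_of_dominated_convergence hB (fun ν => ?_) (Eventually.of_forall fun N ν => ?_)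
  · have hwt : ∀ k, Tendsto (fun N : ℕ => wt q a β (c / q ^ N) (β k * q ^ ν k)) atTop
        (𝓝 (1 * (∏ l, qp q (q * (β l)⁻¹ * (β k * q ^ ν k))) /
          ∏ j, qp q (a j * (β k * q ^ ν k)))) := by
      intro k
      refine ((tendsto_qp_one hq ?_).mul_const _).div_const _
      refine (tendsto_pow_mul_zero hq (q * c⁻¹ * (β k * q ^ ν k))).congr fun N => ?_
      simp only [mul_inv, div_eq_mul_inv, inv_inv]
      ring
    have hlim := ((((tendsto_pow_mul_zero hq u).pow (∑ k, ν k)).mul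
      (tendsto_finsetProd Finset.univ fun k _ => hwt k)).mul_const
      (∏ k, ∏ l ∈ Finset.Ioi k, (β k * q ^ ν k - β l * q ^ ν l)))
    have hval : T ν = 0 ^ (∑ k, ν k) * (∏ k, (1 * (∏ l, qp q (q * (β l)⁻¹ * (β k * q ^ ν k))) /
          ∏ j, qp q (a j * (β k * q ^ ν k)))) *
          (∏ k, ∏ l ∈ Finset.Ioi k, (β k * q ^ ν k - β l * q ^ ν l)) := by
      by_cases h : ν = 0
      · subst h
        simp [hT]
      · have hs : ∑ k, ν k ≠ 0 := fun h0 => h (funext fun k => by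
          simpa using Finset.sum_eq_zero_iff.1 h0 k (Finset.mem_univ k))
        simp [hT, h, hs]
    rw [hval]
    refine hlim.congr fun N => ?_
    rw [dterm, huN]
  · have hqN : ‖q ^ N‖ ≤ 1 := by
      rw [norm_pow]
      exact pow_le_one₀ (norm_nonneg _) hq.le
    have hqN0 : 0 < ‖q ^ N‖ := norm_pos_iff.2 (pow_ne_zero _ hq0)
    refine hbd _ ?_ ?_ ν
    · rw [norm_div]
      exact le_div_self (norm_nonneg _) hqN0 hqN
    · rw [huN, norm_mul]
      exact mul_le_of_le_one_right (norm_nonneg _) hqN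

lemma qp_mul_tsum_dterm (hq : ‖q‖ < 1) (hq0 : q ≠ 0) (ha : ∀ j, a j ≠ 0) (hβ : ∀ k, β k ≠ 0)
    (hqa : ∀ j k, ∀ ν : ℕ, qp q (a j * (β k * q ^ ν)) ≠ 0)
    {c : ℂ} (hc : c ≠ 0) (hu : ‖q * (∏ j, a j)⁻¹ * (c * ∏ l, β l)⁻¹‖ < 1) :
    qp q (q * (∏ j, a j)⁻¹ * (c * ∏ l, β l)⁻¹) * ∑' ν, dterm q a β c ν =
      (∏ j, qp q (q * (a j)⁻¹ * c⁻¹)) *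
        ((∏ k, (∏ l, qp q (q * (β l)⁻¹ * β k)) / ∏ j, qp q (a j * β k)) *
          ∏ k, ∏ l ∈ Finset.Ioi k, (β k - β l)) := by
  have h1 := (tendsto_prod_qp hq (q * (∏ j, a j)⁻¹ * (c * ∏ l, β l)⁻¹)).mul_const
    (∑' ν, dterm q a β c ν)
  have h2 := (tendsto_finsetProd Finset.univ
    fun j _ => tendsto_prod_qp hq (q * (a j)⁻¹ * c⁻¹)).mul (tendsto_tsum_dterm hq hq0 hc hu)
  refine tendsto_nhds_unique h1 (h2.congr fun N => ?_)
  exact (tsum_dterm_iterate hq hq0 ha hβ hqa hc hu N).symm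

/-- The numerators of the surviving term combine with the differences into theta functions. -/
lemma prod_qp_mul_diff (hq : ‖q‖ < 1) (hβ : ∀ k, β k ≠ 0) :
    (∏ k, ∏ l, qp q (q * (β l)⁻¹ * β k)) * ∏ k, ∏ l ∈ Finset.Ioi k, (β k - β l) =
      qp q q ^ n * ∏ k, ∏ l ∈ Finset.Ioi k, β k * th q (β l / β k) := by
  have hsplit : ∏ k, ∏ l, qp q (q * (β l)⁻¹ * β k) = qp q q ^ n *
      ∏ k, ∏ l ∈ Finset.Ioi k, (qp q (q * (β k)⁻¹ * β l) * qp q (q * (β l)⁻¹ * β k)) := by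
    rw [Finset.prod_prod_Ioi_mul_eq_prod_prod_off_diag (fun k l => qp q (q * (β l)⁻¹ * β k)),
      Finset.prod_comm]
    have hdiag : qp q q ^ n = ∏ k, qp q (q * (β k)⁻¹ * β k) := by
      simp [mul_assoc, inv_mul_cancel₀ (hβ _)]
    rw [hdiag, ← Finset.prod_mul_distrib]
    exact Finset.prod_congr rfl fun k _ => Fintype.prod_eq_mul_prod_compl k _
  rw [hsplit, mul_assoc, ← Finset.prod_mul_distrib]
  congr 1
  refine Finset.prod_congr rfl fun k _ => ?_
  rw [← Finset.prod_mul_distrib]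
  refine Finset.prod_congr rfl fun l _ => ?_
  have e1 : q / (β l / β k) = q * (β l)⁻¹ * β k := by
    rw [div_div_eq_mul_div]
    ring
  have e2 : q * (β l / β k) = q * (β k)⁻¹ * β l := by ring
  have e3 : β k - β l = β k * (1 - β l / β k) := by
    have := hβ k
    field_simp
  rw [th, e1, qp_eq_mul hq (β l / β k), e2, e3]
  ring

end Limit

/-- Evaluation of the regularized truncated dual Dixon–Anderson sum. -/
theorem jbar_reg_evaluation
    (q : ℝ) (hq0 : 0 < q) (hq1 : q < 1) (n : ℕ) (hn : 1 ≤ n)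
    (a b : Fin (n + 1) → ℂ) (ha : ∀ i, a i ≠ 0) (hb : ∀ i, b i ≠ 0)
    (hbal : (q : ℝ) < ‖(∏ j, a j) * ∏ j, b j‖)
    (i : Fin (n + 1))
    (hab : ∀ j k, k ≠ i → ∀ m : ℤ, a j * b k ≠ (q : ℂ) ^ m)
    (hbb : ∀ k l, k ≠ l → k ≠ i → l ≠ i → ∀ m : ℤ, b k / b l ≠ (q : ℂ) ^ m) :
    Summable (jbarTerm (q : ℂ) a b i) ∧
      jbarReg (q : ℂ) a b i =
        (1 - (q : ℂ)) ^ n * qp (q : ℂ) (q : ℂ) ^ n *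
          (∏ j, ∏ k, qp (q : ℂ) ((q : ℂ) * (a j)⁻¹ * (b k)⁻¹)) /
          qp (q : ℂ) ((q : ℂ) * (∏ j, a j)⁻¹ * (∏ j, b j)⁻¹) := by
  have hqn : ‖(q : ℂ)‖ < 1 := by
    rw [Complex.norm_real, Real.norm_of_nonneg hq0.le]
    exact hq1
  have hq0' : (q : ℂ) ≠ 0 := by exact_mod_cast hq0.ne'
  set β : Fin n → ℂ := fun k => b (i.succAbove k) with hβdef
  have hβ : ∀ k, β k ≠ 0 := fun k => hb _
  have hc : b i ≠ 0 := hb i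
  have hprodb : ∏ j, b j = b i * ∏ l, β l := Fin.prod_univ_succAbove b i
  -- a factor of `(x)_∞` can only vanish when `x` is a power of `q`
  have hfactor : ∀ x : ℂ, (∀ m : ℤ, x ≠ (q : ℂ) ^ m) → qp (q : ℂ) x ≠ 0 := by
    intro x hx
    refine qp_ne_zero hqn fun s hs => hx (-(s : ℤ)) ?_
    rw [zpow_neg, zpow_natCast]
    exact eq_inv_of_mul_eq_one_right (sub_eq_zero.1 hs).symm
  have hqa : ∀ j k, ∀ ν : ℕ, qp (q : ℂ) (a j * (β k * (q : ℂ) ^ ν)) ≠ 0 := by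
    intro j k ν
    refine hfactor _ fun m hm => hab j _ (Fin.succAbove_ne i k) (m - ν) ?_
    rw [zpow_sub₀ hq0', zpow_natCast, eq_div_iff (pow_ne_zero _ hq0'), ← hm, mul_assoc]
  have hu : ‖(q : ℂ) * (∏ j, a j)⁻¹ * (b i * ∏ l, β l)⁻¹‖ < 1 := by
    rw [← hprodb, mul_assoc, ← mul_inv, norm_mul, norm_inv, Complex.norm_real,
      Real.norm_of_nonneg hq0.le, ← div_eq_mul_inv]
    exact (div_lt_one (hq0.trans hbal)).2 hbal
  have hfun : jbarTerm (q : ℂ) a b i = dterm (q : ℂ) a β (b i) :=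
    funext fun ν => jbarTerm_eq_dterm _ a b i ν
  refine ⟨hfun ▸ summable_dterm hqn hc hu, ?_⟩
  have hmain := qp_mul_tsum_dterm hqn hq0' ha hβ hqa hc hu
  have hqu : qp (q : ℂ) ((q : ℂ) * (∏ j, a j)⁻¹ * (b i * ∏ l, β l)⁻¹) ≠ 0 := by
    refine qp_ne_zero hqn fun s hs => ?_
    have h1 : ‖(q : ℂ) ^ s * ((q : ℂ) * (∏ j, a j)⁻¹ * (b i * ∏ l, β l)⁻¹)‖ < 1 := by
      rw [norm_mul, norm_pow]
      exact mul_lt_one_of_nonneg_of_lt_one_right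
        (pow_le_one₀ (norm_nonneg _) hqn.le) (norm_nonneg _) hu
    rw [← sub_eq_zero.1 hs, norm_one] at h1
    exact lt_irrefl _ h1
  have hD : ∏ k, ∏ l ∈ Finset.Ioi k, β k * th (q : ℂ) (β l / β k) ≠ 0 := by
    refine Finset.prod_ne_zero_iff.2 fun k _ => Finset.prod_ne_zero_iff.2 fun l hl => ?_
    have hkl : l ≠ k := (Finset.mem_Ioi.1 hl).ne'
    have hne : ∀ m : ℤ, β l / β k ≠ (q : ℂ) ^ m :=
      hbb _ _ (fun h => hkl (Fin.succAbove_right_injective h))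
        (Fin.succAbove_ne i l) (Fin.succAbove_ne i k)
    refine mul_ne_zero (hβ k) (mul_ne_zero (hfactor _ hne) (hfactor _ fun m hm => ?_))
    refine hne (1 - m) ?_
    rw [zpow_sub₀ hq0', zpow_one, ← hm]
    have h1 := hβ k
    have h2 := hβ l
    field_simp
  have hE : ∏ k, ∏ j, qp (q : ℂ) (a j * β k) ≠ 0 :=
    Finset.prod_ne_zero_iff.2 fun k _ => Finset.prod_ne_zero_iff.2 fun j _ => by
      simpa using hqa j k 0
  have hth : ∏ k, ∏ j, th (q : ℂ) (a j * β k) = (∏ k, ∏ j, qp (q : ℂ) (a j * β k)) *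
      ∏ k, ∏ j, qp (q : ℂ) ((q : ℂ) * (a j)⁻¹ * (β k)⁻¹) := by
    rw [← Finset.prod_mul_distrib]
    refine Finset.prod_congr rfl fun k _ => ?_
    rw [← Finset.prod_mul_distrib]
    refine Finset.prod_congr rfl fun j _ => ?_
    rw [th, div_eq_mul_inv, mul_inv, mul_assoc (q : ℂ)]
  have hjk : ∏ j, ∏ k, qp (q : ℂ) ((q : ℂ) * (a j)⁻¹ * (b k)⁻¹) =
      (∏ j, qp (q : ℂ) ((q : ℂ) * (a j)⁻¹ * (b i)⁻¹)) *
        ∏ k, ∏ j, qp (q : ℂ) ((q : ℂ) * (a j)⁻¹ * (β k)⁻¹) := by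
    rw [Finset.prod_comm, Fin.prod_univ_succAbove _ i]
  have hdiff := prod_qp_mul_diff hqn hβ
  rw [Finset.prod_div_distrib] at hmain
  rw [jbarReg, jbarSum, hfun, hprodb, hjk, hth, div_eq_div_iff hD hqu]
  calc _ = (1 - (q : ℂ)) ^ n *
        (qp (q : ℂ) ((q : ℂ) * (∏ j, a j)⁻¹ * (b i * ∏ l, β l)⁻¹) *
          ∑' ν, dterm (q : ℂ) a β (b i) ν) *
        ((∏ k, ∏ j, qp (q : ℂ) (a j * β k)) *
          ∏ k, ∏ j, qp (q : ℂ) ((q : ℂ) * (a j)⁻¹ * (β k)⁻¹)) := by ring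
    _ = (1 - (q : ℂ)) ^ n * (∏ j, qp (q : ℂ) ((q : ℂ) * (a j)⁻¹ * (b i)⁻¹)) *
        ((∏ k, ∏ l, qp (q : ℂ) ((q : ℂ) * (β l)⁻¹ * β k)) *
          ∏ k, ∏ l ∈ Finset.Ioi k, (β k - β l)) *
        ∏ k, ∏ j, qp (q : ℂ) ((q : ℂ) * (a j)⁻¹ * (β k)⁻¹) := by
        rw [hmain]
        generalize ∏ k, ∏ j, qp (q : ℂ) (a j * β k) = E at hE ⊢
        rw [div_eq_mul_inv]
        linear_combination ((1 - (q : ℂ)) ^ n * (∏ j, qp (q : ℂ) ((q : ℂ) * (a j)⁻¹ * (b i)⁻¹)) *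
          ((∏ k, ∏ l, qp (q : ℂ) ((q : ℂ) * (β l)⁻¹ * β k)) *
            ∏ k, ∏ l ∈ Finset.Ioi k, (β k - β l)) *
          ∏ k, ∏ j, qp (q : ℂ) ((q : ℂ) * (a j)⁻¹ * (β k)⁻¹)) * inv_mul_cancel₀ hE
    _ = _ := by
        rw [hdiff]
        ring
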